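/- arXiv:1904.09467 — 3 statements merged into one kernel-verified Lean document; each statement's English description precedes it below -/
import Mathlib

section
/- Let d ≥ 1, let q ≥ 2 and r ∈ {1, …, q − 1} be integers, let ℓ > 0, and let ρ : ℝ^d → ℝ be measurable with |ρ(z)| ≤ 1 for all z and ∫_{ℝ^d} |ρ(z)|^q dz < ∞. Then lim_{R → ∞} R^{−2d} ∫_{([−ℓR, ℓR]^d)^4} |ρ(x_1 − x_2)|^q |ρ(x_3 − x_4)|^r |ρ(x_2 − x_4)|^{q−r} dx_1 dx_2 dx_3 dx_4 = 0. -/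
/-!
Write `F = |ρ|`, `B` for the cube of half-side `ℓR`, `D` for the cube of half-side `2ℓR`, which
contains all differences of points of `B`, and `A s = ∫_D F ^ s`.

For fixed `x₂ ∈ B` the integral over `(x₃, x₄)` is at most `A r * A (q - r)`, and the remaining
integral of `F (x₁ - x₂) ^ q` over `(x₁, x₂)` is at most `vol B * ∫ F ^ q`
(`iterated_lintegral_le`). As `vol B` has order `R ^ d`, it remains to see that
`A r * A (q - r) = o(R ^ d)`. This is `exists_mul_setLIntegral_le`, which needs no Hölder
inequality: choose `K` of finite measure carrying almost all of the mass of `F ^ q`.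

* Off `K` in both variables, `F u ^ r * F v ^ (q - r) ≤ F u ^ q + F v ^ q` gives a contribution of
  at most `2 * vol D * ∫_{Kᶜ} F ^ q`.
* If one variable lies in `K`, the contribution is at most `vol K * A s` with `s = r` or
  `s = q - r`. Here `A s = o(vol D)`, because `F ^ s ≤ δ + δ⁻¹ ^ q * F ^ q` for every `δ > 0`.

Everything is done with `ℝ≥0∞`-valued integrals, so that no integrability has to be checked for
the iterated integrals.
-/

open MeasureTheory Filter
open scoped ENNReal

/-- A power of a function bounded by `1` is at most `δ` plus a multiple of its `q`-th power; where
`a > δ`, already `1 ≤ (δ⁻¹ * a) ^ q`. -/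
lemma pow_le_add_inv_pow_mul {a δ : ℝ≥0∞} (ha : a ≤ 1) (hδ : δ ≠ 0) (hδ' : δ ≠ ∞)
    {s : ℕ} (hs : 1 ≤ s) (q : ℕ) : a ^ s ≤ δ + δ⁻¹ ^ q * a ^ q := by
  have h1 : a ^ s ≤ a := by
    simpa using pow_le_pow_of_le_one (zero_le (a := a)) ha hs
  rcases le_total a δ with h | h
  · exact (h1.trans h).trans le_self_add
  · have : 1 ≤ δ⁻¹ ^ q * a ^ q := by
      rw [← mul_pow]
      apply one_le_pow₀
      rw [← ENNReal.inv_mul_cancel hδ hδ']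
      gcongr
    exact (h1.trans (ha.trans this)).trans le_add_self

lemma pow_mul_pow_le_add (a b : ℝ≥0∞) {q r : ℕ} (hrq : r ≤ q) :
    a ^ r * b ^ (q - r) ≤ a ^ q + b ^ q := by
  rcases le_total a b with h | h
  · calc a ^ r * b ^ (q - r) ≤ b ^ r * b ^ (q - r) := by gcongr
      _ = b ^ q := by rw [← pow_add, Nat.add_sub_cancel' hrq]
      _ ≤ _ := le_add_self
  · calc a ^ r * b ^ (q - r) ≤ a ^ r * a ^ (q - r) := by gcongr
      _ = a ^ q := by rw [← pow_add, Nat.add_sub_cancel' hrq]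
      _ ≤ _ := le_self_add

lemma lintegral_mul_lintegral_le {E : Type*} [MeasurableSpace E] (ν : Measure E)
    {F : E → ℝ≥0∞} (hF : Measurable F) {q r : ℕ} (hrq : r ≤ q) :
    (∫⁻ x, F x ^ r ∂ν) * (∫⁻ x, F x ^ (q - r) ∂ν) ≤ 2 * (ν Set.univ * ∫⁻ x, F x ^ q ∂ν) := by
  calc (∫⁻ x, F x ^ r ∂ν) * (∫⁻ x, F x ^ (q - r) ∂ν)
      = ∫⁻ u, ∫⁻ v, F u ^ r * F v ^ (q - r) ∂ν ∂ν := by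
        rw [← lintegral_mul_const _ (hF.pow_const r)]
        refine lintegral_congr fun u => ?_
        rw [lintegral_const_mul _ (hF.pow_const _)]
    _ ≤ ∫⁻ u, ∫⁻ v, (F u ^ q + F v ^ q) ∂ν ∂ν := by
        gcongr with u v
        exact pow_mul_pow_le_add _ _ hrq
    _ = 2 * (ν Set.univ * ∫⁻ x, F x ^ q ∂ν) := by
        have h : ∀ u, ∫⁻ v, (F u ^ q + F v ^ q) ∂ν
            = F u ^ q * ν Set.univ + ∫⁻ v, F v ^ q ∂ν := fun u => by
          rw [lintegral_add_right _ (hF.pow_const q), lintegral_const]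
        simp_rw [h]
        rw [lintegral_add_right _ measurable_const, lintegral_const,
          lintegral_mul_const _ (hF.pow_const q)]
        ring

/-- If `F ≤ 1` and `∫ F ^ q` is finite, then `(∫_S F ^ r) * (∫_S F ^ (q - r)) = o(μ S)`, uniformly
in the set `S`. -/
lemma exists_mul_setLIntegral_le {E : Type*} [MeasurableSpace E] (μ : Measure E)
    {F : E → ℝ≥0∞} (hF : Measurable F) (hF1 : ∀ x, F x ≤ 1) {q r : ℕ} (hr : 1 ≤ r) (hrq : r < q)
    (hq : ∫⁻ x, F x ^ q ∂μ ≠ ∞) {ε : ℝ≥0∞} (hε : ε ≠ 0) :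
    ∃ M : ℝ≥0∞, M ≠ ∞ ∧ ∀ S : Set E,
      (∫⁻ x in S, F x ^ r ∂μ) * (∫⁻ x in S, F x ^ (q - r) ∂μ) ≤ ε * μ S + M := by
  have hε2 : ε / 2 / 2 ≠ 0 := by simp [hε]
  obtain ⟨K, hK, hKfin, hKε⟩ := exists_setLIntegral_compl_lt hq hε2
  have h2K : 2 * μ K ≠ ∞ := ENNReal.mul_ne_top (by simp) hKfin.ne
  obtain ⟨δ, hδ, hδK⟩ := ENNReal.exists_nnreal_pos_mul_lt h2K (b := ε / 2) (by simp [hε])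
  have hδ0 : (δ : ℝ≥0∞) ≠ 0 := by simpa using hδ.ne'
  set X : ℝ≥0∞ := (δ : ℝ≥0∞)⁻¹ ^ q * ∫⁻ x, F x ^ q ∂μ with hX
  have hXfin : X ≠ ∞ := ENNReal.mul_ne_top (ENNReal.pow_ne_top (by simpa using hδ0)) hq
  refine ⟨2 * μ K * X, ENNReal.mul_ne_top h2K hXfin, fun S => ?_⟩
  set ν := μ.restrict S with hν
  have hA : ∀ s, 1 ≤ s → ∫⁻ x, F x ^ s ∂ν ≤ δ * μ S + X := fun s hs => by
    calc ∫⁻ x, F x ^ s ∂ν ≤ ∫⁻ x, (δ + (δ : ℝ≥0∞)⁻¹ ^ q * F x ^ q) ∂ν := by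
          gcongr with x
          exact pow_le_add_inv_pow_mul (hF1 x) hδ0 (by simp) hs q
      _ = δ * μ S + (δ : ℝ≥0∞)⁻¹ ^ q * ∫⁻ x, F x ^ q ∂ν := by
          rw [lintegral_add_left measurable_const, lintegral_const,
            lintegral_const_mul _ (hF.pow_const q), hν, Measure.restrict_apply_univ]
      _ ≤ δ * μ S + X := by
          rw [hX]
          gcongr
          exact Measure.restrict_le_self
  have hsplit : ∀ s, ∫⁻ x, F x ^ s ∂ν ≤ μ K + ∫⁻ x in Kᶜ, F x ^ s ∂ν := fun s => by
    rw [← lintegral_add_compl _ hK]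
    gcongr
    calc ∫⁻ x in K, F x ^ s ∂ν ≤ ∫⁻ x in K, 1 ∂ν := by
          gcongr with x
          exact pow_le_one₀ zero_le (hF1 x)
      _ ≤ μ K := by
          rw [setLIntegral_one]
          exact Measure.restrict_le_self K
  have hQ : ∀ s, ∫⁻ x in Kᶜ, F x ^ s ∂ν ≤ ∫⁻ x, F x ^ s ∂ν := fun s =>
    lintegral_mono' Measure.restrict_le_self le_rfl
  have hQQ : (∫⁻ x in Kᶜ, F x ^ r ∂ν) * (∫⁻ x in Kᶜ, F x ^ (q - r) ∂ν)
      ≤ 2 * (μ S * (ε / 2 / 2)) := by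
    refine (lintegral_mul_lintegral_le _ hF hrq.le).trans ?_
    refine mul_le_mul_right (mul_le_mul' ?_ ?_) 2
    · rw [Measure.restrict_apply_univ]
      exact (measure_mono (Set.subset_univ _)).trans (by rw [hν, Measure.restrict_apply_univ])
    · refine le_trans ?_ hKε.le
      exact lintegral_mono' (Measure.restrict_mono le_rfl Measure.restrict_le_self) le_rfl
  have h4 : 2 * (μ S * (ε / 2 / 2)) = ε / 2 * μ S := by
    rw [mul_left_comm, ENNReal.mul_div_cancel (by simp) (by simp), mul_comm]
  calc (∫⁻ x, F x ^ r ∂ν) * (∫⁻ x, F x ^ (q - r) ∂ν)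
      ≤ (μ K + ∫⁻ x in Kᶜ, F x ^ r ∂ν) * (∫⁻ x, F x ^ (q - r) ∂ν) := by
        gcongr
        exact hsplit r
    _ = μ K * (∫⁻ x, F x ^ (q - r) ∂ν)
          + (∫⁻ x in Kᶜ, F x ^ r ∂ν) * (∫⁻ x, F x ^ (q - r) ∂ν) := by ring
    _ ≤ μ K * (∫⁻ x, F x ^ (q - r) ∂ν)
          + (∫⁻ x in Kᶜ, F x ^ r ∂ν) * (μ K + ∫⁻ x in Kᶜ, F x ^ (q - r) ∂ν) := by
        gcongr
        exact hsplit _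
    _ = μ K * (∫⁻ x, F x ^ (q - r) ∂ν) + (∫⁻ x in Kᶜ, F x ^ r ∂ν) * μ K
          + (∫⁻ x in Kᶜ, F x ^ r ∂ν) * (∫⁻ x in Kᶜ, F x ^ (q - r) ∂ν) := by ring
    _ ≤ μ K * (δ * μ S + X) + (δ * μ S + X) * μ K + ε / 2 * μ S := by
        rw [← h4]
        gcongr
        · exact hA _ (by omega)
        · exact (hQ r).trans (hA r hr)
    _ = (δ * (2 * μ K)) * μ S + ε / 2 * μ S + 2 * μ K * X := by ring
    _ ≤ ε / 2 * μ S + ε / 2 * μ S + 2 * μ K * X := by gcongr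
    _ = ε * μ S + 2 * μ K * X := by rw [← add_mul, ENNReal.add_halves]

/-- The cube `[-a, a] ^ d` in `ℝ ^ d`. -/
def cube (d : ℕ) (a : ℝ) : Set (EuclideanSpace ℝ (Fin d)) :=
  {x | ∀ i, x i ∈ Set.Icc (-a) a}

lemma measurableSet_cube (d : ℕ) (a : ℝ) : MeasurableSet (cube d a) := by
  have : cube d a = ⋂ i, (fun x : EuclideanSpace ℝ (Fin d) => x i) ⁻¹' Set.Icc (-a) a := by
    ext x; simp [cube]
  rw [this]
  exact MeasurableSet.iInter fun i => (by fun_prop : Measurable _) measurableSet_Icc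

lemma volume_cube (d : ℕ) (a : ℝ) : volume (cube d a) = ENNReal.ofReal (2 * a) ^ d := by
  have h := (EuclideanSpace.volume_preserving_symm_measurableEquiv_toLp (Fin d)).measure_preimage
    (s := Set.Icc (fun _ => -a) (fun _ => a)) measurableSet_Icc.nullMeasurableSet
  rw [Real.volume_Icc_pi] at h
  have h2 : cube d a = (MeasurableEquiv.toLp 2 (Fin d → ℝ)).symm ⁻¹'
      Set.Icc (fun _ => -a) (fun _ => a) := by
    ext x
    simp [cube, Pi.le_def, forall_and]
  rw [h2, h]
  simp [two_mul]

lemma sub_mem_cube {d : ℕ} {a : ℝ} {x y : EuclideanSpace ℝ (Fin d)}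
    (hx : x ∈ cube d a) (hy : y ∈ cube d a) : x - y ∈ cube d (2 * a) := by
  intro i
  have h1 := hx i
  have h2 := hy i
  simp only [Set.mem_Icc, PiLp.sub_apply] at *
  constructor <;> linarith [h1.1, h1.2, h2.1, h2.2]

lemma setLIntegral_sub_right_le {d : ℕ} {a : ℝ} {g : EuclideanSpace ℝ (Fin d) → ℝ≥0∞}
    {y : EuclideanSpace ℝ (Fin d)} (hy : y ∈ cube d a) :
    ∫⁻ x in cube d a, g (x - y) ≤ ∫⁻ z in cube d (2 * a), g z := by
  rw [← lintegral_indicator (measurableSet_cube d a),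
    ← lintegral_indicator (measurableSet_cube d _),
    ← lintegral_sub_right_eq_self (Set.indicator (cube d (2 * a)) g) y]
  refine lintegral_mono fun x => ?_
  by_cases hx : x ∈ cube d a
  · simp [hx, sub_mem_cube hx hy]
  · simp [hx]

lemma setLIntegral_sub_left_le {d : ℕ} {a : ℝ} {g : EuclideanSpace ℝ (Fin d) → ℝ≥0∞}
    {x : EuclideanSpace ℝ (Fin d)} (hx : x ∈ cube d a) :
    ∫⁻ y in cube d a, g (x - y) ≤ ∫⁻ z in cube d (2 * a), g z := by
  rw [← lintegral_indicator (measurableSet_cube d a),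
    ← lintegral_indicator (measurableSet_cube d _),
    ← lintegral_sub_left_eq_self (Set.indicator (cube d (2 * a)) g) x]
  refine lintegral_mono fun y => ?_
  by_cases hy : y ∈ cube d a
  · simp [hy, sub_mem_cube hx hy]
  · simp [hy]

/-- The fourfold integral decouples: `x₃` and `x₄` are integrated first, for fixed `x₂`. -/
lemma iterated_lintegral_le {d : ℕ} (a : ℝ) {f g h : EuclideanSpace ℝ (Fin d) → ℝ≥0∞}
    (hf : Measurable f) (hg : Measurable g) (hh : Measurable h) :
    ∫⁻ x₁ in cube d a, ∫⁻ x₂ in cube d a, ∫⁻ x₃ in cube d a, ∫⁻ x₄ in cube d a,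
        f (x₁ - x₂) * g (x₃ - x₄) * h (x₂ - x₄)
      ≤ (∫⁻ z, f z) * volume (cube d a) *
        ((∫⁻ z in cube d (2 * a), g z) * ∫⁻ z in cube d (2 * a), h z) := by
  set P := (∫⁻ z in cube d (2 * a), g z) * ∫⁻ z in cube d (2 * a), h z with hP
  have hin : ∀ x₁, ∀ x₂ ∈ cube d a, ∫⁻ x₃ in cube d a, ∫⁻ x₄ in cube d a,
      f (x₁ - x₂) * g (x₃ - x₄) * h (x₂ - x₄) ≤ f (x₁ - x₂) * P := by
    intro x₁ x₂ hx₂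
    rw [lintegral_lintegral_swap (by fun_prop)]
    calc ∫⁻ x₄ in cube d a, ∫⁻ x₃ in cube d a, f (x₁ - x₂) * g (x₃ - x₄) * h (x₂ - x₄)
        = ∫⁻ x₄ in cube d a,
            f (x₁ - x₂) * (∫⁻ x₃ in cube d a, g (x₃ - x₄)) * h (x₂ - x₄) := by
          refine lintegral_congr fun x₄ => ?_
          rw [lintegral_mul_const _ (by fun_prop), lintegral_const_mul _ (by fun_prop)]
      _ ≤ ∫⁻ x₄ in cube d a,
            f (x₁ - x₂) * (∫⁻ z in cube d (2 * a), g z) * h (x₂ - x₄) := by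
          refine setLIntegral_mono (by fun_prop) fun x₄ hx₄ => ?_
          exact mul_le_mul_left (mul_le_mul_right (setLIntegral_sub_right_le hx₄) _) _
      _ = f (x₁ - x₂) * (∫⁻ z in cube d (2 * a), g z) * ∫⁻ x₄ in cube d a, h (x₂ - x₄) := by
          rw [lintegral_const_mul _ (by fun_prop)]
      _ ≤ f (x₁ - x₂) * P := by
          rw [hP, ← mul_assoc]
          exact mul_le_mul_right (setLIntegral_sub_left_le hx₂) _
  calc _ ≤ ∫⁻ x₁ in cube d a, ∫⁻ x₂ in cube d a, f (x₁ - x₂) * P :=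
        lintegral_mono fun x₁ => setLIntegral_mono (by fun_prop) (hin x₁)
    _ ≤ ∫⁻ x₁ in cube d a, (∫⁻ z, f z) * P := by
        refine lintegral_mono fun x₁ => ?_
        rw [lintegral_mul_const _ (by fun_prop)]
        refine mul_le_mul_left ?_ P
        calc ∫⁻ x₂ in cube d a, f (x₁ - x₂) ≤ ∫⁻ x₂, f (x₁ - x₂) := setLIntegral_le_lintegral _ _
          _ = ∫⁻ z, f z := lintegral_sub_left_eq_self f x₁
    _ = _ := by
        rw [lintegral_const, Measure.restrict_apply_univ]
        ring

/-- **Key contraction estimate.** If `|ρ| ≤ 1`, `|ρ|^q` is integrable on `ℝ^d`, `q ≥ 2` and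
`1 ≤ r ≤ q − 1`, then
`R^{−2d} ∫_{([−ℓR,ℓR]^d)^4} |ρ(x₁−x₂)|^q |ρ(x₃−x₄)|^r |ρ(x₂−x₄)|^{q−r} dx → 0` as `R → ∞`. -/
theorem contraction_norm_vanishes
    (d : ℕ) (hd : 1 ≤ d) (q r : ℕ) (hq : 2 ≤ q) (hr : 1 ≤ r) (hrq : r ≤ q - 1)
    (ℓ : ℝ) (hℓ : 0 < ℓ)
    (ρ : EuclideanSpace ℝ (Fin d) → ℝ) (hρmeas : Measurable ρ)
    (hρbdd : ∀ z, |ρ z| ≤ 1)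
    (hρq : Integrable (fun z => |ρ z| ^ q)) :
    Tendsto (fun R : ℝ =>
        ((R : ℝ) ^ (2 * d))⁻¹ *
          ∫ x₁ in {x : EuclideanSpace ℝ (Fin d) | ∀ i, x i ∈ Set.Icc (-(ℓ * R)) (ℓ * R)},
          ∫ x₂ in {x : EuclideanSpace ℝ (Fin d) | ∀ i, x i ∈ Set.Icc (-(ℓ * R)) (ℓ * R)},
          ∫ x₃ in {x : EuclideanSpace ℝ (Fin d) | ∀ i, x i ∈ Set.Icc (-(ℓ * R)) (ℓ * R)},
          ∫ x₄ in {x : EuclideanSpace ℝ (Fin d) | ∀ i, x i ∈ Set.Icc (-(ℓ * R)) (ℓ * R)},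
            |ρ (x₁ - x₂)| ^ q * |ρ (x₃ - x₄)| ^ r * |ρ (x₂ - x₄)| ^ (q - r))
      atTop (nhds 0) := by
  set F : EuclideanSpace ℝ (Fin d) → ℝ≥0∞ := fun z => ‖ρ z‖ₑ with hFdef
  have hF : Measurable F := hρmeas.enorm
  have hF1 : ∀ x, F x ≤ 1 := fun x => by
    rw [hFdef]
    simpa [← ofReal_norm] using hρbdd x
  have hFq : ∫⁻ z, F z ^ q ≠ ∞ := by
    have := hρq.hasFiniteIntegral
    simpa [HasFiniteIntegral, hFdef, enorm_pow] using this.ne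
  set C := ∫⁻ z, F z ^ q with hC
  change Tendsto (fun R : ℝ => ((R : ℝ) ^ (2 * d))⁻¹ *
    ∫ x₁ in cube d (ℓ * R), ∫ x₂ in cube d (ℓ * R), ∫ x₃ in cube d (ℓ * R),
      ∫ x₄ in cube d (ℓ * R), |ρ (x₁ - x₂)| ^ q * |ρ (x₃ - x₄)| ^ r * |ρ (x₂ - x₄)| ^ (q - r))
    atTop (nhds 0)
  set I : ℝ → ℝ := fun R => ∫ x₁ in cube d (ℓ * R), ∫ x₂ in cube d (ℓ * R),
    ∫ x₃ in cube d (ℓ * R), ∫ x₄ in cube d (ℓ * R),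
      |ρ (x₁ - x₂)| ^ q * |ρ (x₃ - x₄)| ^ r * |ρ (x₂ - x₄)| ^ (q - r) with hI
  have hbound : ∀ R, ‖I R‖ₑ ≤ C * volume (cube d (ℓ * R)) *
      ((∫⁻ z in cube d (2 * (ℓ * R)), F z ^ r) *
        ∫⁻ z in cube d (2 * (ℓ * R)), F z ^ (q - r)) := fun R => by
    refine le_trans ?_ (iterated_lintegral_le (ℓ * R) (hF.pow_const q) (hF.pow_const r)
      (hF.pow_const (q - r)))
    refine (enorm_integral_le_lintegral_enorm _).trans (lintegral_mono fun x₁ => ?_)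
    refine (enorm_integral_le_lintegral_enorm _).trans (lintegral_mono fun x₂ => ?_)
    refine (enorm_integral_le_lintegral_enorm _).trans (lintegral_mono fun x₃ => ?_)
    refine (enorm_integral_le_lintegral_enorm _).trans (lintegral_mono fun x₄ => ?_)
    simp [hFdef, enorm_mul, enorm_pow]
  -- In real terms: the normalized integral is at most `c * (ε * (4 * ℓ) ^ d + M / R ^ d)`.
  set c : ℝ := C.toReal * (2 * ℓ) ^ d with hc
  have hc0 : 0 ≤ c := by positivity
  have hreal : ∀ ε : ℝ, 0 < ε → ∃ M : ℝ, ∀ R : ℝ, 0 < R →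
      |(R ^ (2 * d))⁻¹ * I R| ≤ c * (ε * (4 * ℓ) ^ d + M * (R ^ d)⁻¹) := fun ε hε => by
    obtain ⟨M, hM, hMS⟩ := exists_mul_setLIntegral_le volume hF hF1 hr (by omega : r < q) hFq
      (ε := ENNReal.ofReal ε) (by simpa using hε)
    refine ⟨M.toReal, fun R hR => ?_⟩
    have h1 := (hbound R).trans (mul_le_mul_right (hMS _) _)
    rw [volume_cube, volume_cube] at h1
    have h2 : C * ENNReal.ofReal (2 * (ℓ * R)) ^ d *
        (ENNReal.ofReal ε * ENNReal.ofReal (2 * (2 * (ℓ * R))) ^ d + M) =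
        ENNReal.ofReal (C.toReal * (2 * (ℓ * R)) ^ d *
          (ε * (2 * (2 * (ℓ * R))) ^ d + M.toReal)) := by
      have hu : 0 ≤ 2 * (ℓ * R) := by positivity
      have hv : 0 ≤ 2 * (2 * (ℓ * R)) := by positivity
      generalize 2 * (2 * (ℓ * R)) = v at hv ⊢
      generalize 2 * (ℓ * R) = u at hu ⊢
      rw [ENNReal.ofReal_mul (p := C.toReal * u ^ d) (by positivity),
        ENNReal.ofReal_mul (p := C.toReal) (by positivity),
        ENNReal.ofReal_add (by positivity) (by positivity), ENNReal.ofReal_mul hε.le,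
        ENNReal.ofReal_toReal hFq, ENNReal.ofReal_toReal hM, ENNReal.ofReal_pow hu,
        ENNReal.ofReal_pow hv]
    rw [h2, ← ofReal_norm, ENNReal.ofReal_le_ofReal_iff (by positivity),
      Real.norm_eq_abs] at h1
    rw [abs_mul, abs_of_nonneg (by positivity : 0 ≤ (R ^ (2 * d))⁻¹)]
    refine (mul_le_mul_of_nonneg_left h1 (by positivity)).trans_eq ?_
    rw [hc, show 2 * (ℓ * R) = (2 * ℓ) * R by ring, show 2 * (2 * ℓ * R) = (4 * ℓ) * R by ring,
      mul_pow (2 * ℓ), mul_pow (4 * ℓ), two_mul d, pow_add]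
    have : R ^ d ≠ 0 := by positivity
    field_simp
  rw [Metric.tendsto_nhds]
  intro η hη
  -- Choose `ε` so that `c * ε * (4 * ℓ) ^ d < η`; the term with `M` vanishes in the limit.
  set k : ℝ := c * (4 * ℓ) ^ d with hk
  have hk0 : 0 ≤ k := by positivity
  obtain ⟨M, hM⟩ := hreal (η / (k + 1)) (by positivity)
  have hlim : Tendsto (fun R : ℝ => c * (η / (k + 1) * (4 * ℓ) ^ d + M * (R ^ d)⁻¹)) atTop
      (nhds (c * (η / (k + 1) * (4 * ℓ) ^ d + M * 0))) :=
    (((tendsto_pow_atTop (by omega : d ≠ 0)).inv_tendsto_atTop.const_mul M).const_add _).const_mul c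
  have hlt : c * (η / (k + 1) * (4 * ℓ) ^ d + M * 0) < η := by
    have : c * (η / (k + 1) * (4 * ℓ) ^ d + M * 0) = η * (k / (k + 1)) := by
      rw [hk]; ring
    rw [this]
    exact mul_lt_of_lt_one_right hη ((div_lt_one (by positivity)).2 (by linarith))
  filter_upwards [hlim.eventually_lt_const hlt, eventually_gt_atTop 0] with R h1 h2
  rw [Real.dist_eq, sub_zero]
  exact (hM R h2).trans_lt h1
end

section
/- Let d ≥ 1 and q ≥ 1 be integers, let ρ : ℝ^d → ℝ be measurable with ∫_{ℝ^d} |ρ(z)|^q dz < ∞, let h : ℝ^d → ℝ be continuous, and let B_1, B_2 ⊂ ℝ^d be bounded closed sets whose topological boundaries have Lebesgue measure zero. Then lim_{R → ∞} R^d ∫_{B_1} ∫_{B_2} ρ(R(x − y))^q h(x) h(y) dx dy = (∫_{ℝ^d} ρ(z)^q dz) · ∫_{B_1 ∩ B_2} h(y)² dy. -/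
/-!
Write `g = ρ ^ q` and let `f` be `h` cut off to `B₂`. The substitution `y = x - z / R` in the inner
integral absorbs the factor `R ^ d` and turns the expression into
`∫ x in B₁, h x * ∫ z, g z * f (x - z / R)` (`scaled_inner_integral`). Off the null set
`frontier B₂` the function `f` is continuous at `x`, so dominated convergence in `z`, with bound
`C * |g z|`, sends the inner integral to `f x * ∫ g` (`tendsto_inner_integral`). Since the inner
integrals are bounded by `C * ∫ |g|` and `B₁` is compact, dominated convergence in `x` gives the
claim. Keeping the two limits separate avoids any use of Fubini's theorem.
-/

open MeasureTheory Filter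

/-- The change of variables `y = x - z / R`; no integrability of `g` or `f` is needed. -/
lemma scaled_inner_integral {d : ℕ} (g f : EuclideanSpace ℝ (Fin d) → ℝ)
    {R : ℝ} (hR : 0 < R) (x : EuclideanSpace ℝ (Fin d)) :
    R ^ (d : ℝ) * ∫ y, g (R • (x - y)) * f y = ∫ z, g z * f (x - R⁻¹ • z) := by
  have h1 : ∫ y, g (R • (x - y)) * f y = ∫ w, g (R • w) * f (x - w) := by
    rw [← integral_sub_left_eq_self (fun w => g (R • w) * f (x - w)) volume x]
    simp
  have h2 := Measure.integral_comp_smul (volume : Measure (EuclideanSpace ℝ (Fin d)))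
    (fun z => g z * f (x - R⁻¹ • z)) R
  simp only [inv_smul_smul₀ hR.ne', finrank_euclideanSpace_fin, smul_eq_mul] at h2
  rw [h1, h2, abs_of_pos (by positivity), Real.rpow_natCast, mul_inv_cancel_left₀ (by positivity)]

lemma tendsto_inner_integral {d : ℕ} {g f : EuclideanSpace ℝ (Fin d) → ℝ}
    (hg : Integrable g) (hf : Measurable f) {C : ℝ} (hC : ∀ y, ‖f y‖ ≤ C)
    {x : EuclideanSpace ℝ (Fin d)} (hx : ContinuousAt f x) :
    Tendsto (fun R : ℝ => ∫ z, g z * f (x - R⁻¹ • z)) atTop (nhds ((∫ z, g z) * f x)) := by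
  rw [← integral_mul_const]
  refine tendsto_integral_filter_of_dominated_convergence (fun z => ‖g z‖ * C) ?_ ?_
    (hg.norm.mul_const C) ?_
  · exact Eventually.of_forall fun R => hg.aestronglyMeasurable.mul
      (hf.comp (by fun_prop)).aestronglyMeasurable
  · refine Eventually.of_forall fun R => Eventually.of_forall fun z => ?_
    rw [norm_mul]
    gcongr
    exact hC _
  · refine Eventually.of_forall fun z => Tendsto.const_mul _ ?_
    have h0 : Tendsto (fun R : ℝ => x - R⁻¹ • z) atTop (nhds x) := by
      simpa using ((tendsto_inv_atTop_zero (𝕜 := ℝ)).smul_const z).const_sub x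
    exact hx.tendsto.comp h0

/-- **Asymptotic covariance computation.** If `|ρ|^q` is integrable on `ℝ^d`, `h` is
continuous, and `B₁, B₂` are bounded closed sets with Lebesgue-negligible boundaries, then
`R^d ∫_{B₁} ∫_{B₂} ρ(R(x−y))^q h(x) h(y) dx dy → (∫ ρ(z)^q dz) ∫_{B₁ ∩ B₂} h(y)² dy`. -/
theorem asymptotic_covariance
    (d : ℕ) (hd : 1 ≤ d) (q : ℕ) (hq : 1 ≤ q)
    (ρ : EuclideanSpace ℝ (Fin d) → ℝ) (hρmeas : Measurable ρ)
    (hρq : Integrable (fun z => |ρ z| ^ q))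
    (h : EuclideanSpace ℝ (Fin d) → ℝ) (hh : Continuous h)
    (B₁ B₂ : Set (EuclideanSpace ℝ (Fin d)))
    (hB₁closed : IsClosed B₁) (hB₂closed : IsClosed B₂)
    (hB₁bdd : Bornology.IsBounded B₁) (hB₂bdd : Bornology.IsBounded B₂)
    (hB₁frontier : volume (frontier B₁) = 0) (hB₂frontier : volume (frontier B₂) = 0) :
    Tendsto (fun R : ℝ =>
        R ^ (d : ℝ) * ∫ x in B₁, ∫ y in B₂, ρ (R • (x - y)) ^ q * h x * h y)
      atTop
      (nhds ((∫ z, ρ z ^ q) * ∫ y in B₁ ∩ B₂, (h y) ^ 2)) := by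
  have hgm : Measurable (fun z => ρ z ^ q) := hρmeas.pow_const q
  have hg : Integrable (fun z => ρ z ^ q) := by
    rw [← integrable_norm_iff hgm.aestronglyMeasurable]
    simpa only [norm_pow, Real.norm_eq_abs] using hρq
  have hB₁c : IsCompact B₁ := Metric.isCompact_of_isClosed_isBounded hB₁closed hB₁bdd
  have hB₂c : IsCompact B₂ := Metric.isCompact_of_isClosed_isBounded hB₂closed hB₂bdd
  have hfm : Measurable (B₂.indicator h) := hh.measurable.indicator hB₂closed.measurableSet
  obtain ⟨C, hC⟩ : ∃ C, ∀ y, ‖B₂.indicator h y‖ ≤ C := by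
    obtain ⟨C, hC⟩ := hB₂c.exists_bound_of_continuousOn hh.continuousOn
    refine ⟨max C 0, fun y => ?_⟩
    by_cases hy : y ∈ B₂
    · simpa [hy] using Or.inl (hC y hy)
    · simp [hy]
  have hlim : (∫ z, ρ z ^ q) * ∫ y in B₁ ∩ B₂, (h y) ^ 2
      = ∫ x in B₁, h x * ((∫ z, ρ z ^ q) * B₂.indicator h x) := by
    rw [← setIntegral_indicator hB₂closed.measurableSet, ← integral_const_mul]
    congr 1 with x
    by_cases hx : x ∈ B₂
    · simp only [hx, Set.indicator_of_mem]
      ring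
    · simp [hx]
  have hEq : (fun R : ℝ => ∫ x in B₁, h x * ∫ z, ρ z ^ q * B₂.indicator h (x - R⁻¹ • z))
      =ᶠ[atTop] fun R : ℝ =>
        R ^ (d : ℝ) * ∫ x in B₁, ∫ y in B₂, ρ (R • (x - y)) ^ q * h x * h y := by
    filter_upwards [eventually_gt_atTop 0] with R hR
    rw [← integral_const_mul]
    congr 1 with x
    rw [← scaled_inner_integral (fun z => ρ z ^ q) _ hR x, mul_left_comm, ← integral_const_mul,
      ← integral_indicator hB₂closed.measurableSet]
    congr 2 with y
    by_cases hy : y ∈ B₂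
    · simp only [hy, Set.indicator_of_mem]
      ring
    · simp [hy]
  rw [hlim]
  refine Tendsto.congr' hEq ?_
  refine tendsto_integral_filter_of_dominated_convergence
    (fun x => ‖h x‖ * ∫ z, ‖ρ z ^ q‖ * C) ?_ ?_ ?_ ?_
  · refine Eventually.of_forall fun R => hh.aestronglyMeasurable.mul ?_
    have hm : Measurable (fun p : EuclideanSpace ℝ (Fin d) × EuclideanSpace ℝ (Fin d) =>
        ρ p.2 ^ q * B₂.indicator h (p.1 - R⁻¹ • p.2)) :=
      (hgm.comp measurable_snd).mul (hfm.comp (by fun_prop))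
    exact hm.stronglyMeasurable.integral_prod_right.aestronglyMeasurable
  · refine Eventually.of_forall fun R => Eventually.of_forall fun x => ?_
    rw [norm_mul]
    gcongr
    refine norm_integral_le_of_norm_le (hg.norm.mul_const C) (Eventually.of_forall fun z => ?_)
    rw [norm_mul]
    gcongr
    exact hC _
  · exact (hh.norm.mul continuous_const).continuousOn.integrableOn_compact hB₁c
  · have hae : ∀ᵐ x ∂(volume.restrict B₁), x ∉ frontier B₂ :=
      ae_restrict_of_ae (measure_eq_zero_iff_ae_notMem.mp hB₂frontier)
    filter_upwards [hae] with x hx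
    exact (tendsto_inner_integral hg hfm hC
      (hh.continuousOn.continuousAt_indicator hx)).const_mul _
end

section
/- Let a* ∈ ℝ \ {0}, b ∈ ℝ, and f ∈ L¹([0, 1]); set F(x) := ∫_0^x f(y) dy and c* := b a* + ∫_0^1 F(z) dz. Let g : [0, 1] → ℝ be integrable with F·g integrable and ∫_0^1 g(y) dy ≠ 0, and set q(y) := g(y) − 1/a*, c_g := (b + ∫_0^1 F(y) g(y) dy) · (∫_0^1 g(y) dy)^{−1}, u(x) := c_g ∫_0^x g(y) dy − ∫_0^x F(y) g(y) dy, ū(x) := c* x / a* − (1/a*) ∫_0^x F(y) dy, and F(x, y) := (c* − F(y)) 1_{[0,x]}(y) + x (F(y) − c*). Then for every x ∈ [0, 1]: u(x) − ū(x) = ∫_0^1 F(x, y) q(y) dy + (c_g − c*) ∫_0^x q(y) dy + x (∫_0^1 g(y) dy)^{−1} [ c* (∫_0^1 q(y) dy)² − (∫_0^1 F(y) q(y) dy)(∫_0^1 q(y) dy) ]. -/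
open MeasureTheory intervalIntegral

/-!
Everything follows from linearity of the integral. Since `F` is a primitive of an integrable
function, it is continuous on `[0, 1]`, so `F`, `g`, `F g` (hence `q` and `F q`) are integrable
there. Splitting off the indicator gives
`∫₀¹ F(x, y) q(y) dy = c* ∫₀ˣ q - ∫₀ˣ F q + x (∫₀¹ F q - c* ∫₀¹ q)`.
Writing `G = ∫₀¹ g`, so that `1 - G⁻¹ ∫₀¹ q = (a* G)⁻¹`, the claim then reduces to
`(c_g - c*) G = ∫₀¹ F q - c* ∫₀¹ q`, which is exactly what the choice of `c_g` and `c*` provides.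
-/

/-- **Deterministic decomposition of the random corrector.** With `q(y) = g(y) − 1/a*`,
for every `x ∈ [0,1]`:
`u(x) − ū(x) = ∫_0^1 F(x,y) q(y) dy + (c_g − c*) ∫_0^x q(y) dy`
`+ x (∫_0^1 g)⁻¹ [c* (∫_0^1 q)² − (∫_0^1 F q)(∫_0^1 q)]`. -/
theorem corrector_decomposition
    (astar : ℝ) (hastar : astar ≠ 0) (b : ℝ)
    (f : ℝ → ℝ) (hf : IntegrableOn f (Set.Icc (0 : ℝ) 1))
    (F : ℝ → ℝ) (hF : ∀ x, F x = ∫ y in (0 : ℝ)..x, f y)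
    (cstar : ℝ) (hcstar : cstar = b * astar + ∫ z in (0 : ℝ)..1, F z)
    (g : ℝ → ℝ) (hg : IntegrableOn g (Set.Icc (0 : ℝ) 1))
    (hFg : IntegrableOn (fun y => F y * g y) (Set.Icc (0 : ℝ) 1))
    (hg0 : (∫ y in (0 : ℝ)..1, g y) ≠ 0)
    (qq : ℝ → ℝ) (hqq : ∀ y, qq y = g y - astar⁻¹)
    (cg : ℝ) (hcg : cg = (b + ∫ y in (0 : ℝ)..1, F y * g y) / (∫ y in (0 : ℝ)..1, g y))
    (u : ℝ → ℝ)
    (hu : ∀ x, u x = cg * (∫ y in (0 : ℝ)..x, g y) - ∫ y in (0 : ℝ)..x, F y * g y)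
    (ubar : ℝ → ℝ)
    (hubar : ∀ x, ubar x = cstar * x / astar - astar⁻¹ * ∫ y in (0 : ℝ)..x, F y)
    (Fker : ℝ → ℝ → ℝ)
    (hFker : ∀ x y, Fker x y
      = (cstar - F y) * Set.indicator (Set.Icc (0 : ℝ) x) (fun _ => (1 : ℝ)) y
        + x * (F y - cstar)) :
    ∀ x ∈ Set.Icc (0 : ℝ) 1,
      u x - ubar x
        = (∫ y in (0 : ℝ)..1, Fker x y * qq y)
          + (cg - cstar) * (∫ y in (0 : ℝ)..x, qq y)
          + x * (∫ y in (0 : ℝ)..1, g y)⁻¹ *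
            (cstar * (∫ y in (0 : ℝ)..1, qq y) ^ 2
              - (∫ y in (0 : ℝ)..1, F y * qq y) * (∫ y in (0 : ℝ)..1, qq y)) := by
  rintro x ⟨hx0, hx1⟩
  have hf1 : IntervalIntegrable f volume 0 1 :=
    (intervalIntegrable_iff_integrableOn_Icc_of_le zero_le_one).2 hf
  have hg1 : IntervalIntegrable g volume 0 1 :=
    (intervalIntegrable_iff_integrableOn_Icc_of_le zero_le_one).2 hg
  have hFg1 : IntervalIntegrable (fun y => F y * g y) volume 0 1 :=
    (intervalIntegrable_iff_integrableOn_Icc_of_le zero_le_one).2 hFg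
  have hF1 : IntervalIntegrable F volume 0 1 := by
    rw [funext hF]
    exact (continuousOn_primitive_interval' hf1 Set.left_mem_uIcc).intervalIntegrable
  have hsub : Set.uIcc 0 x ⊆ Set.uIcc (0 : ℝ) 1 := by
    rw [Set.uIcc_of_le hx0, Set.uIcc_of_le zero_le_one]
    exact Set.Icc_subset_Icc_right hx1
  have hq_eq : qq = fun y => g y - astar⁻¹ := funext hqq
  have hFq_eq : (fun y => F y * qq y) = fun y => F y * g y - astar⁻¹ * F y := by
    funext y; rw [hqq]; ring
  have hq1 : IntervalIntegrable qq volume 0 1 := by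
    rw [hq_eq]; exact hg1.sub intervalIntegrable_const
  have hFq1 : IntervalIntegrable (fun y => F y * qq y) volume 0 1 := by
    rw [hFq_eq]; exact hFg1.sub (hF1.const_mul _)
  have intq : ∀ t, Set.uIcc 0 t ⊆ Set.uIcc (0 : ℝ) 1 →
      ∫ y in (0 : ℝ)..t, qq y = (∫ y in (0 : ℝ)..t, g y) - astar⁻¹ * t := by
    intro t ht
    rw [hq_eq, integral_sub (hg1.mono_set ht) intervalIntegrable_const,
      intervalIntegral.integral_const]
    simp [mul_comm]
  have intFq : ∀ t, Set.uIcc 0 t ⊆ Set.uIcc (0 : ℝ) 1 →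
      ∫ y in (0 : ℝ)..t, F y * qq y
        = (∫ y in (0 : ℝ)..t, F y * g y) - astar⁻¹ * ∫ y in (0 : ℝ)..t, F y := by
    intro t ht
    rw [hFq_eq, integral_sub (hFg1.mono_set ht) ((hF1.mono_set ht).const_mul _),
      intervalIntegral.integral_const_mul]
  have hP1 : IntervalIntegrable (fun y => cstar * qq y - F y * qq y) volume 0 1 :=
    (hq1.const_mul _).sub hFq1
  have intP : ∀ t, Set.uIcc 0 t ⊆ Set.uIcc (0 : ℝ) 1 →
      ∫ y in (0 : ℝ)..t, (cstar * qq y - F y * qq y)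
        = cstar * (∫ y in (0 : ℝ)..t, qq y) - ∫ y in (0 : ℝ)..t, F y * qq y := by
    intro t ht
    rw [integral_sub ((hq1.mono_set ht).const_mul _) (hFq1.mono_set ht),
      intervalIntegral.integral_const_mul]
  have hind : IntervalIntegrable
      ((Set.Icc 0 x).indicator fun y => cstar * qq y - F y * qq y) volume 0 1 := by
    rw [intervalIntegrable_iff] at hP1 ⊢
    exact hP1.indicator measurableSet_Icc
  have intInd : ∫ y in (0 : ℝ)..1, (Set.Icc 0 x).indicator (fun y => cstar * qq y - F y * qq y) y
      = ∫ y in (0 : ℝ)..x, (cstar * qq y - F y * qq y) := by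
    have hset : Set.Ioc (0 : ℝ) 1 ∩ Set.Icc 0 x = Set.Ioc 0 x := by
      ext y
      simp only [Set.mem_inter_iff, Set.mem_Ioc, Set.mem_Icc]
      constructor
      · rintro ⟨⟨h0, -⟩, -, hyx⟩
        exact ⟨h0, hyx⟩
      · rintro ⟨h0, hyx⟩
        exact ⟨⟨h0, hyx.trans hx1⟩, h0.le, hyx⟩
    rw [integral_of_le zero_le_one, integral_of_le hx0,
      setIntegral_indicator measurableSet_Icc, hset]
  have hker : (fun y => Fker x y * qq y) = fun y =>
      (Set.Icc 0 x).indicator (fun y => cstar * qq y - F y * qq y) y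
        - x * (cstar * qq y - F y * qq y) := by
    funext y
    rw [hFker]
    by_cases hy : y ∈ Set.Icc 0 x
    · simp only [Set.indicator_of_mem hy]; ring
    · simp only [Set.indicator_of_notMem hy]; ring
  rw [hker, integral_sub hind (hP1.const_mul _), intervalIntegral.integral_const_mul, intInd,
    intP x hsub, intP 1 subset_rfl, intq x hsub, intq 1 subset_rfl, intFq x hsub,
    intFq 1 subset_rfl, hu, hubar, hcg, hcstar]
  field_simp
  ring
end
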